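/- In the tadpole graph with cycle of odd length k, let v be the far endpoint of the pendant path and let v', v'' be the two cycle vertices farthest from v. Then for any cycle vertex w, the hitting time from w to v equals h_{v'v} - l(l+1), where l is the smaller of the distances from w to v' and to v'' along the cycle. -/

import Mathlib

open scoped Classical

/-- Transition probability of the simple random walk on `G`. -/
noncomputable def stepProb {V : Type*} [Fintype V] (G : SimpleGraph V) (a b : V) : ℝ :=
  if G.Adj a b then 1 / (G.degree a) else 0

/-- Probability that the simple random walk started at `u` follows the step sequence `w`. -/
noncomputable def walkProb {V : Type*} [Fintype V] (G : SimpleGraph V) :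
    (u : V) → {n : ℕ} → (Fin n → V) → ℝ
  | _, 0, _ => 1
  | u, n + 1, w => stepProb G u (w 0) * walkProb G (w 0) (fun i : Fin n => w i.succ)

/-- Probability that the walk started at `u` first reaches `v` at time exactly `n` (for `n ≥ 1`). -/
noncomputable def firstHitProb {V : Type*} [Fintype V] (G : SimpleGraph V) (u v : V) (n : ℕ) : ℝ :=
  ∑ w ∈ Finset.univ.filter (fun w : Fin n → V =>
      (∀ i : Fin n, (i : ℕ) + 1 < n → w i ≠ v) ∧ ∀ i : Fin n, (i : ℕ) + 1 = n → w i = v),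
    walkProb G u w

/-- Expected hitting time of `v` for the simple random walk on `G` started at `u`. -/
noncomputable def hittingTime {V : Type*} [Fintype V] (G : SimpleGraph V) (u v : V) : ℝ :=
  if u = v then 0 else ∑' n : ℕ, (n : ℝ) * firstHitProb G u v n

/-- Expected first return time to `v` of the simple random walk on `G` started at `v`. -/
noncomputable def expectedReturnTime {V : Type*} [Fintype V] (G : SimpleGraph V) (v : V) : ℝ :=
  ∑' n : ℕ, (n : ℝ) * firstHitProb G v v n
/-- The tadpole graph: a cycle on `k` vertices (`Sum.inl`) together with a pendant path
on `l` additional vertices (`Sum.inr`), attached to cycle vertex `0`; path vertex `j` is at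
distance `j + 1` from the cycle, so `Sum.inr ⟨l-1,_⟩` is the far endpoint of the path. -/
def tadpole (k l : ℕ) : SimpleGraph (Fin k ⊕ Fin l) :=
  SimpleGraph.fromRel (fun x y =>
    match x, y with
    | Sum.inl i, Sum.inl j => ((i : ℕ) + 1) % k = (j : ℕ)
    | Sum.inl i, Sum.inr j => (i : ℕ) = 0 ∧ (j : ℕ) = 0
    | Sum.inr i, Sum.inr j => (i : ℕ) + 1 = (j : ℕ)
    | Sum.inr _, Sum.inl _ => False)

open Finset in
lemma firstHit_one {V : Type*} [Fintype V] (G : SimpleGraph V) (u v : V) :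
    firstHitProb G u v 1 = stepProb G u v := by
  unfold firstHitProb
  rw [Finset.sum_eq_single (fun _ => v)]
  · simp [walkProb]
  · intro w hw hne
    exfalso
    apply hne
    funext i
    simp only [Finset.mem_filter] at hw
    exact hw.2.2 i (by omega)
  · intro h
    exfalso
    apply h
    simp

lemma firstHit_succ {V : Type*} [Fintype V] (G : SimpleGraph V) (u v : V) (n : ℕ) :
    firstHitProb G u v (n + 2) =
      ∑ x, if x = v then 0 else stepProb G u x * firstHitProb G x v (n + 1) := by
  unfold firstHitProb
  rw [Finset.sum_filter, ← (Fin.consEquiv (fun _ : Fin (n + 2) => V)).sum_comp,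
    Fintype.sum_prod_type]
  refine Finset.sum_congr rfl fun x _ => ?_
  split_ifs with hx
  · apply Finset.sum_eq_zero
    intro w _
    rw [if_neg]
    rintro ⟨h1, -⟩
    exact h1 0 (by simp) (by simpa [Fin.consEquiv] using hx)
  · rw [Finset.sum_filter, Finset.mul_sum]
    refine Finset.sum_congr rfl fun w _ => ?_
    have key : ((∀ i : Fin (n + 2), (i : ℕ) + 1 < n + 2 →
          (Fin.consEquiv (fun _ : Fin (n + 2) => V)) (x, w) i ≠ v) ∧
        ∀ i : Fin (n + 2), (i : ℕ) + 1 = n + 2 →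
          (Fin.consEquiv (fun _ : Fin (n + 2) => V)) (x, w) i = v) ↔
        ((∀ i : Fin (n + 1), (i : ℕ) + 1 < n + 1 → w i ≠ v) ∧
          ∀ i : Fin (n + 1), (i : ℕ) + 1 = n + 1 → w i = v) := by
      rw [Fin.forall_fin_succ, Fin.forall_fin_succ (P := fun i : Fin (n + 2) => (i : ℕ) + 1 = n + 2 →
          (Fin.consEquiv (fun _ : Fin (n + 2) => V)) (x, w) i = v)]
      simp [Fin.consEquiv, hx]
    simp only [key]
    split_ifs
    · simp [walkProb, Fin.consEquiv]
    · simp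

/-- iterates of the walk killed at `v` -/
noncomputable def killed {V : Type*} [Fintype V] (G : SimpleGraph V) (v : V) (g : V → ℝ) :
    ℕ → V → ℝ
  | 0, u => g u
  | n + 1, u => ∑ x, if x = v then 0 else stepProb G u x * killed G v g n x

lemma stepProb_nonneg {V : Type*} [Fintype V] (G : SimpleGraph V) (a b : V) :
    0 ≤ stepProb G a b := by
  unfold stepProb; split_ifs <;> positivity

lemma firstHit_eq {V : Type*} [Fintype V] (G : SimpleGraph V) (v : V)
    (hP : ∀ u, u ≠ v → ∑ x, stepProb G u x = 1) (n : ℕ) : ∀ u, u ≠ v →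
    firstHitProb G u v (n + 1) = killed G v (fun _ => 1) n u - killed G v (fun _ => 1) (n + 1) u := by
  induction n with
  | zero =>
    intro u hu
    rw [firstHit_one]
    simp only [killed, mul_one]
    rw [← hP u hu, ← Finset.sum_sub_distrib]
    rw [Finset.sum_eq_single v]
    · simp
    · intro b _ hb; simp [hb]
    · simp
  | succ n ih =>
    intro u hu
    rw [firstHit_succ]
    rw [killed, killed, ← Finset.sum_sub_distrib]
    refine Finset.sum_congr rfl fun x _ => ?_
    split_ifs with hx
    · simp
    · rw [ih x hx]; ring

lemma killed_split {V : Type*} [Fintype V] (G : SimpleGraph V) (v : V) (g : V → ℝ) (hgv : g v = 0)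
    (hg : ∀ u, u ≠ v → g u = 1 + ∑ x, stepProb G u x * g x) (n : ℕ) : ∀ u, u ≠ v →
    killed G v g n u = killed G v g (n + 1) u + killed G v (fun _ => 1) n u := by
  induction n with
  | zero =>
    intro u hu
    simp only [killed]
    rw [hg u hu, add_comm]
    congr 1
    refine Finset.sum_congr rfl fun x _ => ?_
    split_ifs with hx
    · simp [hx, hgv]
    · rfl
  | succ n ih =>
    intro u hu
    rw [killed, killed, killed, ← Finset.sum_add_distrib]
    refine Finset.sum_congr rfl fun x _ => ?_
    split_ifs with hx
    · simp
    · rw [ih x hx]; ring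

lemma killed_mono {V : Type*} [Fintype V] (G : SimpleGraph V) (v : V) (g h : V → ℝ) (c : ℝ)
    (hgh : ∀ u, u ≠ v → g u ≤ c * h u) (n : ℕ) : ∀ u, u ≠ v →
    killed G v g n u ≤ c * killed G v h n u := by
  induction n with
  | zero => exact hgh
  | succ n ih =>
    intro u hu
    rw [killed, killed, Finset.mul_sum]
    refine Finset.sum_le_sum fun x _ => ?_
    split_ifs with hx
    · simp
    · have := mul_le_mul_of_nonneg_left (ih x hx) (stepProb_nonneg G u x)
      linarith

lemma killed_nonneg {V : Type*} [Fintype V] (G : SimpleGraph V) (v : V) (g : V → ℝ)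
    (hg : ∀ u, u ≠ v → 0 ≤ g u) (n : ℕ) : ∀ u, u ≠ v → 0 ≤ killed G v g n u := by
  induction n with
  | zero => exact hg
  | succ n ih =>
    intro u hu
    rw [killed]
    refine Finset.sum_nonneg fun x _ => ?_
    split_ifs with hx
    · simp
    · exact mul_nonneg (stepProb_nonneg G u x) (ih x hx)

lemma firstHit_nonneg {V : Type*} [Fintype V] (G : SimpleGraph V) (v : V) (n : ℕ) : ∀ u,
    0 ≤ firstHitProb G u v (n + 1) := by
  induction n with
  | zero => intro u; rw [firstHit_one]; exact stepProb_nonneg G u v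
  | succ n ih =>
    intro u
    rw [firstHit_succ]
    refine Finset.sum_nonneg fun x _ => ?_
    split_ifs with hx
    · simp
    · exact mul_nonneg (stepProb_nonneg G u x) (ih x)

lemma hitting_eq {V : Type*} [Fintype V] (G : SimpleGraph V) (v : V) (g : V → ℝ) (M : ℝ)
    (hP : ∀ u, u ≠ v → ∑ x, stepProb G u x = 1) (hgv : g v = 0)
    (hg1 : ∀ u, u ≠ v → 1 ≤ g u) (hM : 1 ≤ M) (hgM : ∀ u, g u ≤ M)
    (hg : ∀ u, u ≠ v → g u = 1 + ∑ x, stepProb G u x * g x) (u : V) :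
    hittingTime G u v = g u := by
  unfold hittingTime
  split_ifs with hu
  · rw [hu, hgv]
  have hM0 : 0 < M := by linarith
  set r : ℝ := 1 - 1 / M with hr
  have hr0 : 0 ≤ r := by
    have : 1 / M ≤ 1 := by rw [div_le_one hM0]; exact hM
    linarith
  have hr1 : r < 1 := by
    have : 0 < 1 / M := by positivity
    linarith
  have hs0 : ∀ n, 0 ≤ killed G v (fun _ => 1) n u := fun n =>
    killed_nonneg G v _ (fun _ _ => zero_le_one) n u hu
  have ha0 : ∀ n, 0 ≤ killed G v g n u := fun n =>
    killed_nonneg G v _ (fun x hx => by linarith [hg1 x hx]) n u hu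
  have hsa : ∀ n, killed G v (fun _ => 1) n u ≤ killed G v g n u := fun n => by
    have := killed_mono G v (fun _ => 1) g 1 (fun x hx => by simpa using hg1 x hx) n u hu
    linarith
  have has : ∀ n, killed G v g n u ≤ M * killed G v (fun _ => 1) n u := fun n =>
    killed_mono G v g (fun _ => 1) M (fun x _ => by simpa using hgM x) n u hu
  have hgeo : ∀ n, killed G v g n u ≤ r ^ n * M := by
    intro n
    induction n with
    | zero => simpa [killed] using hgM u
    | succ n ih =>
      have h1 := killed_split G v g hgv hg n u hu
      have h2 : killed G v g n u / M ≤ killed G v (fun _ => 1) n u := by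
        rw [div_le_iff₀ hM0]; linarith [has n]
      have h3 : killed G v g (n + 1) u ≤ r * killed G v g n u := by
        have : r * killed G v g n u = killed G v g n u - killed G v g n u / M := by
          rw [hr]; ring
        linarith
      calc _ ≤ _ := h3
        _ ≤ r * (r ^ n * M) := mul_le_mul_of_nonneg_left ih hr0
        _ = _ := by ring
  have hpart : ∀ N : ℕ, ∑ n ∈ Finset.range (N + 1), (n : ℝ) * firstHitProb G u v n =
      g u - (N * killed G v (fun _ => 1) N u + killed G v g N u) := by
    intro N
    induction N with
    | zero => simp [killed]
    | succ N ih =>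
      rw [Finset.sum_range_succ, ih, firstHit_eq G v hP N u hu, killed_split G v g hgv hg N u hu]
      push_cast
      ring
  have hlim1 : Filter.Tendsto (fun N : ℕ => killed G v g N u) Filter.atTop (nhds 0) := by
    refine squeeze_zero ha0 hgeo ?_
    simpa using (tendsto_pow_atTop_nhds_zero_of_lt_one hr0 hr1).mul_const M
  have hlim2 : Filter.Tendsto (fun N : ℕ => (N : ℝ) * killed G v (fun _ => 1) N u)
      Filter.atTop (nhds 0) := by
    refine squeeze_zero (g := fun N : ℕ => ((N : ℝ) * r ^ N) * M)
      (fun N => mul_nonneg (Nat.cast_nonneg N) (hs0 N)) (fun N => ?_) ?_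
    · rw [mul_assoc]
      exact mul_le_mul_of_nonneg_left ((hsa N).trans (hgeo N)) (Nat.cast_nonneg N)
    · simpa using (tendsto_self_mul_const_pow_of_lt_one hr0 hr1).mul_const M
  have : HasSum (fun n : ℕ => (n : ℝ) * firstHitProb G u v n) (g u) := by
    rw [hasSum_iff_tendsto_nat_of_nonneg]
    · rw [← Filter.tendsto_add_atTop_iff_nat 1]
      simp only [hpart]
      simpa using (tendsto_const_nhds (x := g u)).sub (hlim2.add hlim1)
    · intro n
      rcases n with _ | n
      · simp
      · exact mul_nonneg (Nat.cast_nonneg _) (firstHit_nonneg G v n u)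
  exact this.tsum_eq

lemma step_sum {V : Type*} [Fintype V] (G : SimpleGraph V) (u : V) (S : Finset V)
    (hS : ∀ x, G.Adj u x ↔ x ∈ S) (g : V → ℝ) :
    ∑ x, stepProb G u x * g x = (∑ x ∈ S, g x) / S.card := by
  have hd : G.degree u = S.card := by
    rw [← SimpleGraph.card_neighborFinset_eq_degree]
    congr 1
    ext x
    rw [SimpleGraph.mem_neighborFinset, hS]
  unfold stepProb
  rw [hd, Finset.sum_div, ← Finset.sum_subset (Finset.subset_univ S)]
  · refine Finset.sum_congr rfl fun x hx => ?_
    rw [if_pos ((hS x).2 hx)]; ring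
  · intro x _ hx
    rw [if_neg (fun h => hx ((hS x).1 h))]; ring

/-- explicit hitting time -/
noncomputable def tadG (k l : ℕ) : Fin k ⊕ Fin l → ℝ
  | Sum.inl i => (l : ℝ) ^ 2 + 2 * k * l + (i : ℕ) * ((k : ℝ) - (i : ℕ))
  | Sum.inr j => (l : ℝ) ^ 2 + 2 * k * l - ((j : ℕ) + 1 : ℝ) ^ 2 - 2 * k * ((j : ℕ) + 1 : ℝ)

lemma mod_step {k i : ℕ} (hi : i < k) :
    (i + 1 < k ∧ (i + 1) % k = i + 1) ∨ (i + 1 = k ∧ (i + 1) % k = 0) := by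
  rcases Nat.lt_or_ge (i + 1) k with h | h
  · exact Or.inl ⟨h, Nat.mod_eq_of_lt h⟩
  · have : i + 1 = k := by omega
    exact Or.inr ⟨this, by rw [this, Nat.mod_self]⟩

/-- the neighbours of any vertex but the endpoint -/
lemma tad_nbrs (k l : ℕ) (hk : 3 ≤ k) (hl : 1 ≤ l) (hlt : l - 1 < l) (u : Fin k ⊕ Fin l)
    (hu : u ≠ Sum.inr ⟨l - 1, hlt⟩) :
    ∃ S : Finset (Fin k ⊕ Fin l), (∀ x, (tadpole k l).Adj u x ↔ x ∈ S) ∧ 0 < S.card ∧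
      ∑ x ∈ S, tadG k l x = S.card * (tadG k l u - 1) := by
  rcases u with ⟨i, hi⟩ | ⟨j, hj⟩
  · by_cases h0 : i = 0
    · subst h0
      have hn1 : (Sum.inl ⟨1, by omega⟩ : Fin k ⊕ Fin l) ∉
          ({Sum.inl ⟨k - 1, by omega⟩, Sum.inr ⟨0, by omega⟩} : Finset (Fin k ⊕ Fin l)) := by
        simp; omega
      have hn2 : (Sum.inl ⟨k - 1, by omega⟩ : Fin k ⊕ Fin l) ∉
          ({Sum.inr ⟨0, by omega⟩} : Finset (Fin k ⊕ Fin l)) := by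
        simp
      refine ⟨{Sum.inl ⟨1, by omega⟩, Sum.inl ⟨k - 1, by omega⟩, Sum.inr ⟨0, by omega⟩}, ?_, ?_, ?_⟩
      · rintro (⟨a, ha⟩ | ⟨b, hb⟩)
        · have := mod_step ha
          have := mod_step hi
          have h1k : 1 % k = 1 := Nat.mod_eq_of_lt (by omega)
          simp only [tadpole, SimpleGraph.fromRel_adj, ne_eq, Sum.inl.injEq, Fin.mk.injEq,
            Finset.mem_insert, Finset.mem_singleton, reduceCtorEq, or_false, zero_add, h1k]
          omega
        · simp [tadpole]
      · rw [Finset.card_pos]; simp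
      · rw [Finset.card_insert_of_notMem hn1, Finset.card_insert_of_notMem hn2,
          Finset.sum_insert hn1, Finset.sum_insert hn2, Finset.sum_singleton, Finset.card_singleton]
        simp only [tadG]
        push_cast [Nat.cast_sub (show 1 ≤ k by omega)]
        ring
    · by_cases h1 : i + 1 = k
      · have hn : (Sum.inl ⟨i - 1, by omega⟩ : Fin k ⊕ Fin l) ∉
            ({Sum.inl ⟨0, by omega⟩} : Finset (Fin k ⊕ Fin l)) := by
          simp; omega
        refine ⟨{Sum.inl ⟨i - 1, by omega⟩, Sum.inl ⟨0, by omega⟩}, ?_, ?_, ?_⟩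
        · rintro (⟨a, ha⟩ | ⟨b, hb⟩)
          · have := mod_step ha
            have := mod_step hi
            simp [tadpole]
            omega
          · simp [tadpole]; omega
        · rw [Finset.card_pos]; simp
        · rw [Finset.card_insert_of_notMem hn, Finset.sum_insert hn, Finset.sum_singleton,
            Finset.card_singleton]
          simp only [tadG]
          push_cast [Nat.cast_sub (show 1 ≤ i by omega), ← h1]
          ring
      · have hn : (Sum.inl ⟨i - 1, by omega⟩ : Fin k ⊕ Fin l) ∉
            ({Sum.inl ⟨i + 1, by omega⟩} : Finset (Fin k ⊕ Fin l)) := by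
          simp
        refine ⟨{Sum.inl ⟨i - 1, by omega⟩, Sum.inl ⟨i + 1, by omega⟩}, ?_, ?_, ?_⟩
        · rintro (⟨a, ha⟩ | ⟨b, hb⟩)
          · have := mod_step ha
            have := mod_step hi
            simp [tadpole]
            omega
          · simp [tadpole]; omega
        · rw [Finset.card_pos]; simp
        · rw [Finset.card_insert_of_notMem hn, Finset.sum_insert hn, Finset.sum_singleton,
            Finset.card_singleton]
          simp only [tadG]
          push_cast [Nat.cast_sub (show 1 ≤ i by omega)]
          ring
  · have hj' : j + 1 < l := by
      have : j ≠ l - 1 := fun h => hu (by simp [h])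
      omega
    by_cases h0 : j = 0
    · subst h0
      have hn : (Sum.inl ⟨0, by omega⟩ : Fin k ⊕ Fin l) ∉
          ({Sum.inr ⟨1, by omega⟩} : Finset (Fin k ⊕ Fin l)) := by
        simp
      refine ⟨{Sum.inl ⟨0, by omega⟩, Sum.inr ⟨1, by omega⟩}, ?_, ?_, ?_⟩
      · rintro (⟨a, ha⟩ | ⟨b, hb⟩)
        · simp [tadpole]
        · simp [tadpole]; omega
      · rw [Finset.card_pos]; simp
      · rw [Finset.card_insert_of_notMem hn, Finset.sum_insert hn, Finset.sum_singleton,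
          Finset.card_singleton]
        simp only [tadG]
        push_cast
        ring
    · have hn : (Sum.inr ⟨j - 1, by omega⟩ : Fin k ⊕ Fin l) ∉
          ({Sum.inr ⟨j + 1, by omega⟩} : Finset (Fin k ⊕ Fin l)) := by
        simp
      refine ⟨{Sum.inr ⟨j - 1, by omega⟩, Sum.inr ⟨j + 1, by omega⟩}, ?_, ?_, ?_⟩
      · rintro (⟨a, ha⟩ | ⟨b, hb⟩)
        · simp [tadpole]; omega
        · simp [tadpole]; omega
      · rw [Finset.card_pos]; simp
      · rw [Finset.card_insert_of_notMem hn, Finset.sum_insert hn, Finset.sum_singleton,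
          Finset.card_singleton]
        simp only [tadG]
        push_cast [Nat.cast_sub (show 1 ≤ j by omega)]
        ring

lemma tad_hit (k l : ℕ) (hk : 3 ≤ k) (hl : 1 ≤ l) (hlt : l - 1 < l) (u : Fin k ⊕ Fin l) :
    hittingTime (tadpole k l) u (Sum.inr ⟨l - 1, hlt⟩) = tadG k l u := by
  have hl' : (1 : ℝ) ≤ l := by exact_mod_cast hl
  have hk' : (3 : ℝ) ≤ k := by exact_mod_cast hk
  refine hitting_eq _ _ _ ((l : ℝ) ^ 2 + 2 * k * l + k * k) ?_ ?_ ?_ ?_ ?_ ?_ u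
  · intro u hu
    obtain ⟨S, hS, hc, -⟩ := tad_nbrs k l hk hl hlt u hu
    have := step_sum _ u S hS (fun _ => 1)
    have hc' : (S.card : ℝ) ≠ 0 := by positivity
    simpa [hc'] using this
  · simp only [tadG]
    push_cast [Nat.cast_sub hl]
    ring
  · rintro (⟨i, hi⟩ | ⟨j, hj⟩) hu
    · simp only [tadG]
      have : (i : ℝ) ≤ k := by exact_mod_cast hi.le
      have h2 : 0 ≤ (i : ℝ) * (k - i) := mul_nonneg (by positivity) (by linarith)
      nlinarith
    · have hj' : j + 1 + 1 ≤ l := by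
        have : j ≠ l - 1 := fun h => hu (by simp [h])
        omega
      have hj2 : (j : ℝ) + 1 + 1 ≤ l := by exact_mod_cast hj'
      have hj0 : (0 : ℝ) ≤ j := by positivity
      simp only [tadG]
      have : (1 : ℝ) ≤ (l - (j + 1)) * (l + (j + 1) + 2 * k) := by
        have a : (1 : ℝ) ≤ l - (j + 1) := by linarith
        have b : (1 : ℝ) ≤ l + (j + 1) + 2 * k := by linarith
        nlinarith
      nlinarith
  · nlinarith
  · rintro (⟨i, hi⟩ | ⟨j, hj⟩)
    · simp only [tadG]
      have : (i : ℝ) ≤ k := by exact_mod_cast hi.le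
      have hi0 : (0 : ℝ) ≤ i := by positivity
      nlinarith
    · simp only [tadG]
      have : (0 : ℝ) ≤ ((j : ℝ) + 1) ^ 2 + 2 * k * ((j : ℝ) + 1) + k * k := by positivity
      linarith
  · intro u hu
    obtain ⟨S, hS, hc, he⟩ := tad_nbrs k l hk hl hlt u hu
    rw [step_sum _ u S hS, he]
    have hc' : (S.card : ℝ) ≠ 0 := by positivity
    field_simp
    ring

theorem stmt_10 (k l : ℕ) (hk : 3 ≤ k) (hko : Odd k) (hl : 1 ≤ l)
    (v : Fin k ⊕ Fin l) (hv : v = Sum.inr ⟨l - 1, by omega⟩)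
    (v' : Fin k ⊕ Fin l) (hv' : v' = Sum.inl ⟨(k - 1) / 2, by omega⟩)
    (v'' : Fin k ⊕ Fin l) (hv'' : v'' = Sum.inl ⟨(k + 1) / 2, by omega⟩)
    (j : ℕ) (hj : j ≤ (k - 1) / 2) :
    hittingTime (tadpole k l) (Sum.inl ⟨(k - 1) / 2 - j, by omega⟩) v =
      hittingTime (tadpole k l) v' v - (j : ℝ) * (j + 1) ∧
    hittingTime (tadpole k l) (Sum.inl ⟨((k + 1) / 2 + j) % k, Nat.mod_lt _ (by omega)⟩) v =
      hittingTime (tadpole k l) v' v - (j : ℝ) * (j + 1) := by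
  subst hv hv' hv''
  obtain ⟨m, rfl⟩ := hko
  have e1 : (2 * m + 1 - 1) / 2 = m := by omega
  have e2 : (2 * m + 1 + 1) / 2 = m + 1 := by omega
  rw [e1] at hj
  simp only [tad_hit _ l hk hl (Nat.sub_lt hl one_pos), tadG, e1, e2]
  refine ⟨?_, ?_⟩
  · push_cast [Nat.cast_sub hj]
    ring
  · rcases Nat.lt_or_ge j m with h | h
    · rw [Nat.mod_eq_of_lt (by omega)]
      push_cast
      ring
    · have : j = m := by omega
      subst this
      rw [show j + 1 + j = 2 * j + 1 by ring, Nat.mod_self]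
      push_cast
      ring
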